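/- Let (X, μ) and (Y, ν) be Polish probability spaces and ω : X × Y → [0, ∞) continuous. Then inf over all couplings κ of μ and ν of ∫ ω dκ equals the supremum, over pairs (ψ, φ) of bounded continuous real functions on X and Y respectively with φ(y) - ψ(x) ≤ ω(x, y) for all x, y, of ∫_Y φ dν - ∫_X ψ dμ. -/

import Mathlib

open MeasureTheory ENNReal

open scoped CompactlySupported BoundedContinuousFunction in
/-- Hahn-Banach step. -/
lemma kd_hahn_banach {X Y A B : Type*} [TopologicalSpace X] [PolishSpace X]
    [MeasurableSpace X] [BorelSpace X]
    [TopologicalSpace Y] [PolishSpace Y] [MeasurableSpace Y] [BorelSpace Y]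
    [TopologicalSpace A] [CompactSpace A] [TopologicalSpace B] [CompactSpace B]
    (μ : Measure X) (ν : Measure Y)
    [IsProbabilityMeasure μ] [IsProbabilityMeasure ν]
    (ω : X × Y → ℝ) (hω_nonneg : ∀ p, 0 ≤ ω p) (i : X → A) (j : Y → B) (D : ℝ)
    (hD : ∀ (f : X →ᵇ ℝ) (g : Y →ᵇ ℝ) (t : ℝ), 0 ≤ t →
      (∀ x y, 0 ≤ f x + g y + t * ω (x, y)) → 0 ≤ ∫ x, f x ∂μ + ∫ y, g y ∂ν + t * D) :
    ∃ L : C_c(A × B, ℝ) →ₗ[ℝ] ℝ, ∀ (u : C_c(A × B, ℝ)) (f : X →ᵇ ℝ) (g : Y →ᵇ ℝ) (t : ℝ),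
      0 ≤ t → (∀ x y, u (i x, j y) ≤ f x + g y + t * ω (x, y)) →
      L u ≤ ∫ x, f x ∂μ + ∫ y, g y ∂ν + t * D := by
  classical
  let S : C_c(A × B, ℝ) → Set ℝ := fun u => {r | ∃ (f : X →ᵇ ℝ) (g : Y →ᵇ ℝ) (t : ℝ),
      0 ≤ t ∧ (∀ x y, u (i x, j y) ≤ f x + g y + t * ω (x, y)) ∧
      r = ∫ x, f x ∂μ + ∫ y, g y ∂ν + t * D}
  have hadd1 : ∀ f f' : X →ᵇ ℝ, ∫ x, (f + f') x ∂μ = ∫ x, f x ∂μ + ∫ x, f' x ∂μ := fun f f' => by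
    simpa using integral_add (f.integrable μ) (f'.integrable μ)
  have hadd2 : ∀ f f' : Y →ᵇ ℝ, ∫ x, (f + f') x ∂ν = ∫ x, f x ∂ν + ∫ x, f' x ∂ν := fun f f' => by
    simpa using integral_add (f.integrable ν) (f'.integrable ν)
  have hbd : ∀ u : C_c(A × B, ℝ), ∃ C, ∀ z, |u z| ≤ C := by
    intro u
    obtain ⟨C, hC⟩ := (isCompact_univ (X := A × B)).exists_bound_of_continuousOn
      (f := u) (map_continuous u).continuousOn
    exact ⟨C, fun z => hC z trivial⟩
  have hne : ∀ u, (S u).Nonempty := by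
    intro u
    obtain ⟨C, hC⟩ := hbd u
    refine ⟨_, BoundedContinuousFunction.const X C, 0, 0, le_rfl, ?_, rfl⟩
    intro x y
    simpa using (le_abs_self _).trans (hC (i x, j y))
  have hbb : ∀ u, BddBelow (S u) := by
    intro u
    obtain ⟨C, hC⟩ := hbd u
    refine ⟨-C, ?_⟩
    rintro r ⟨f, g, t, ht, h, rfl⟩
    have := hD (f + BoundedContinuousFunction.const X C) g t ht (by
      intro x y
      have h1 := h x y
      have h2 := neg_le_of_abs_le (hC (i x, j y))
      simp only [BoundedContinuousFunction.coe_add, Pi.add_apply,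
        BoundedContinuousFunction.const_apply]
      linarith)
    rw [hadd1] at this
    simp at this
    linarith
  have hhom1 : ∀ c : ℝ, 0 < c → ∀ u, ∀ r ∈ S u, c * r ∈ S (c • u) := by
    rintro c hc u r ⟨f, g, t, ht, h, rfl⟩
    refine ⟨c • f, c • g, c * t, by positivity, ?_, ?_⟩
    · intro x y
      have := mul_le_mul_of_nonneg_left (h x y) hc.le
      simp
      linarith
    · simp [integral_const_mul]
      ring
  have hhom2 : ∀ c : ℝ, 0 < c → ∀ u, sInf (S (c • u)) ≤ c * sInf (S u) := by
    intro c hc u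
    have : c⁻¹ * sInf (S (c • u)) ≤ sInf (S u) := by
      refine le_csInf (hne u) fun r hr => ?_
      rw [inv_mul_le_iff₀ hc]
      exact csInf_le (hbb _) (hhom1 c hc u r hr)
    rwa [inv_mul_le_iff₀ hc] at this
  obtain ⟨L, -, hL⟩ := exists_extension_of_le_sublinear (⊥ : C_c(A × B, ℝ) →ₗ.[ℝ] ℝ)
    (fun u => sInf (S u)) (by
      intro c hc u
      refine le_antisymm (hhom2 c hc u) ?_
      have := hhom2 c⁻¹ (by positivity) (c • u)
      rw [smul_smul, inv_mul_cancel₀ hc.ne', one_smul, le_inv_mul_iff₀ hc] at this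
      exact this) (by
      intro u v
      have : sInf (S (u + v)) - sInf (S v) ≤ sInf (S u) := by
        refine le_csInf (hne u) fun r hr => ?_
        have : sInf (S (u + v)) - r ≤ sInf (S v) := by
          refine le_csInf (hne v) fun s hs => ?_
          have : sInf (S (u + v)) ≤ r + s := by
            refine csInf_le (hbb _) ?_
            obtain ⟨f, g, t, ht, h, rfl⟩ := hr
            obtain ⟨f', g', t', ht', h', rfl⟩ := hs
            refine ⟨f + f', g + g', t + t', by positivity, ?_, ?_⟩
            · intro x y
              have h1 := h x y
              have h2 := h' x y
              simp
              linarith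
            · rw [hadd1, hadd2]; ring
          linarith
        linarith
      linarith) (by
      rintro ⟨x, hx⟩
      have hx0 : x = 0 := (Submodule.mem_bot ℝ).1 hx
      subst hx0
      have : (⊥ : C_c(A × B, ℝ) →ₗ.[ℝ] ℝ) ⟨0, hx⟩ = 0 := LinearPMap.map_zero _
      rw [this]
      refine le_csInf (hne 0) ?_
      rintro r ⟨f, g, t, ht, h, rfl⟩
      exact hD f g t ht h)
  exact ⟨L, fun u f g t ht h => (hL u).trans (csInf_le (hbb u) ⟨f, g, t, ht, h, rfl⟩)⟩

/-- Approximation from below by continuous functions on an ambient metric space. -/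
lemma kd_approx {Z K : Type*} [TopologicalSpace Z] [Nonempty Z] [MetricSpace K]
    (e : Z → K) (he : Topology.IsEmbedding e) (ω : Z → ℝ) (hω : Continuous ω)
    (h0 : ∀ p, 0 ≤ ω p) :
    ∃ v : ℕ → C(K, ℝ), (∀ k p, v k (e p) ≤ ω p) ∧
      ∀ p, Filter.Tendsto (fun k => v k (e p)) Filter.atTop (nhds (ω p)) := by
  have hbb : ∀ (k : ℕ) z, BddBelow (Set.range fun p => min (ω p) k + k * dist z (e p)) := by
    intro k z
    refine ⟨0, ?_⟩
    rintro _ ⟨p, rfl⟩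
    have := h0 p
    positivity
  let w : ℕ → K → ℝ := fun k z => ⨅ p, (min (ω p) k + k * dist z (e p))
  have hw : ∀ k : ℕ, LipschitzWith k (w k) := by
    intro k
    refine LipschitzWith.of_le_add_mul _ ?_
    intro z z'
    have : w k z - (k : NNReal) * dist z z' ≤ w k z' := by
      refine le_ciInf fun p => ?_
      have h1 : w k z ≤ _ := ciInf_le (hbb k z) p
      have h2 := dist_triangle z z' (e p)
      have h3 := mul_le_mul_of_nonneg_left h2 (Nat.cast_nonneg (α := ℝ) k)
      simp only [NNReal.coe_natCast]
      linarith
    linarith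
  have hle : ∀ k p, w k (e p) ≤ ω p := by
    intro k p
    refine (ciInf_le (hbb k (e p)) p).trans ?_
    simp
  refine ⟨fun k => ⟨w k, (hw k).continuous⟩, hle, ?_⟩
  intro p
  refine tendsto_order.2 ⟨fun a ha => ?_, fun a ha => ?_⟩
  swap
  · exact Filter.Eventually.of_forall fun k => (hle k p).trans_lt ha
  obtain ⟨b, hab, hb⟩ := exists_between ha
  have hnhds : {q | b < ω q} ∈ nhds p := (isOpen_lt continuous_const hω).mem_nhds hb
  rw [he.nhds_eq_comap, Filter.mem_comap] at hnhds
  obtain ⟨t, ht, hts⟩ := hnhds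
  obtain ⟨δ, hδ, hball⟩ := Metric.mem_nhds_iff.1 ht
  filter_upwards [Filter.eventually_ge_atTop ⌈b⌉₊, Filter.eventually_ge_atTop ⌈b / δ⌉₊] with k hk1 hk2
  have hk1' : b ≤ k := Nat.ceil_le.1 hk1
  have hk2' : b ≤ k * δ := (div_le_iff₀ hδ).1 (Nat.ceil_le.1 hk2)
  refine hab.trans_le ?_
  refine le_ciInf fun q => ?_
  have hq := h0 q
  by_cases hd : dist (e p) (e q) < δ
  · have : b < ω q := hts (hball (by rwa [Metric.mem_ball, dist_comm]))
    have h1 : b ≤ min (ω q) k := le_min this.le hk1'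
    have : 0 ≤ k * dist (e p) (e q) := by positivity
    linarith
  · push Not at hd
    have h1 := mul_le_mul_of_nonneg_left hd (Nat.cast_nonneg (α := ℝ) k)
    have : 0 ≤ min (ω q) k := le_min hq (Nat.cast_nonneg _)
    linarith

lemma kd_weak {X Y : Type*} [TopologicalSpace X] [PolishSpace X]
    [MeasurableSpace X] [BorelSpace X]
    [TopologicalSpace Y] [PolishSpace Y] [MeasurableSpace Y] [BorelSpace Y]
    (ω : X × Y → ℝ) (hω_cont : Continuous ω) (hω_nonneg : ∀ p, 0 ≤ ω p)
    (κ : Measure (X × Y)) [IsProbabilityMeasure κ]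
    (ψ : BoundedContinuousFunction X ℝ) (φ : BoundedContinuousFunction Y ℝ)
    (h : ∀ x y, φ y - ψ x ≤ ω (x, y)) :
    ENNReal.ofReal ((∫ y, φ y ∂(κ.map Prod.snd)) - (∫ x, ψ x ∂(κ.map Prod.fst))) ≤
      ∫⁻ p, ENNReal.ofReal (ω p) ∂κ := by
  by_cases hfin : ∫⁻ p, ENNReal.ofReal (ω p) ∂κ = ⊤
  · rw [hfin]; exact le_top
  have hint : Integrable ω κ := by
    refine ⟨hω_cont.aestronglyMeasurable, ?_⟩
    rw [hasFiniteIntegral_iff_ofReal (Filter.Eventually.of_forall hω_nonneg)]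
    exact lt_top_iff_ne_top.2 hfin
  rw [← ofReal_integral_eq_lintegral_ofReal hint (Filter.Eventually.of_forall hω_nonneg)]
  refine ENNReal.ofReal_le_ofReal ?_
  rw [integral_map measurable_snd.aemeasurable φ.continuous.aestronglyMeasurable,
    integral_map measurable_fst.aemeasurable ψ.continuous.aestronglyMeasurable]
  have i1 : Integrable (fun p : X × Y => φ p.2) κ :=
    (φ.compContinuous ⟨Prod.snd, continuous_snd⟩).integrable κ
  have i2 : Integrable (fun p : X × Y => ψ p.1) κ :=
    (ψ.compContinuous ⟨Prod.fst, continuous_fst⟩).integrable κ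
  rw [← integral_sub i1 i2]
  exact integral_mono (i1.sub i2) hint fun p => h p.1 p.2

open scoped CompactlySupported BoundedContinuousFunction in
lemma kd_strong {X Y A B : Type*} [TopologicalSpace X] [PolishSpace X]
    [MeasurableSpace X] [BorelSpace X]
    [TopologicalSpace Y] [PolishSpace Y] [MeasurableSpace Y] [BorelSpace Y]
    [MetricSpace A] [CompactSpace A] [MeasurableSpace A] [BorelSpace A]
    [MetricSpace B] [CompactSpace B] [MeasurableSpace B] [BorelSpace B]
    (μ : Measure X) (ν : Measure Y)
    [IsProbabilityMeasure μ] [IsProbabilityMeasure ν]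
    (ω : X × Y → ℝ) (hω_cont : Continuous ω) (hω_nonneg : ∀ p, 0 ≤ ω p)
    (i : X → A) (j : Y → B) (hi : Topology.IsEmbedding i) (hj : Topology.IsEmbedding j) (D : ℝ)
    (hD : ∀ (f : X →ᵇ ℝ) (g : Y →ᵇ ℝ) (t : ℝ), 0 ≤ t →
      (∀ x y, 0 ≤ f x + g y + t * ω (x, y)) → 0 ≤ ∫ x, f x ∂μ + ∫ y, g y ∂ν + t * D) :
    ∃ κ : Measure (X × Y), IsProbabilityMeasure κ ∧
        κ.map Prod.fst = μ ∧ κ.map Prod.snd = ν ∧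
        ∫⁻ p, ENNReal.ofReal (ω p) ∂κ ≤ ENNReal.ofReal D := by
  classical
  obtain ⟨L, hL⟩ := kd_hahn_banach μ ν ω hω_nonneg i j D hD
  have hLneg : ∀ u : C_c(A × B, ℝ), 0 ≤ u → 0 ≤ L u := by
    intro u hu
    have := hL (-u) 0 0 0 le_rfl (by
      intro x y
      have : 0 ≤ u (i x, j y) := hu (i x, j y)
      simpa using this)
    simpa using this
  let Λ : C_c(A × B, ℝ) →ₚ[ℝ] ℝ := PositiveLinearMap.mk₀ L hLneg
  let κ' : Measure (A × B) := RealRMK.rieszMeasure Λ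
  have hκL : ∀ u : C_c(A × B, ℝ), ∫ z, u z ∂κ' = L u := fun u =>
    RealRMK.integral_rieszMeasure Λ u
  have hκfin : IsFiniteMeasure κ' := by
    have : κ'.Regular := RealRMK.regular_rieszMeasure Λ
    infer_instance
  -- marginals
  have him : Measurable i := hi.continuous.measurable
  have hjm : Measurable j := hj.continuous.measurable
  have hm1 : κ'.map Prod.fst = μ.map i := by
    have : IsProbabilityMeasure (μ.map i) := Measure.isProbabilityMeasure_map him.aemeasurable
    refine ext_of_forall_integral_eq_of_IsFiniteMeasure fun f => ?_
    rw [integral_map measurable_fst.aemeasurable f.continuous.aestronglyMeasurable,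
      integral_map him.aemeasurable f.continuous.aestronglyMeasurable]
    let u : C_c(A × B, ℝ) := CompactlySupportedContinuousMap.continuousMapEquiv
      ⟨fun z => f z.1, by fun_prop⟩
    let fi : X →ᵇ ℝ := f.compContinuous ⟨i, hi.continuous⟩
    have h1 := hL u fi 0 0 le_rfl (fun x y => by simp [u, fi])
    have h2 := hL (-u) (-fi) 0 0 le_rfl (fun x y => by simp [u, fi])
    have h3 : ∫ z, f z.1 ∂κ' = L u := hκL u
    have h4 : ∫ x, fi x ∂μ = ∫ x, f (i x) ∂μ := rfl
    simp [integral_neg] at h1 h2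
    rw [h3]
    linarith
  have hm2 : κ'.map Prod.snd = ν.map j := by
    have : IsProbabilityMeasure (ν.map j) := Measure.isProbabilityMeasure_map hjm.aemeasurable
    refine ext_of_forall_integral_eq_of_IsFiniteMeasure fun f => ?_
    rw [integral_map measurable_snd.aemeasurable f.continuous.aestronglyMeasurable,
      integral_map hjm.aemeasurable f.continuous.aestronglyMeasurable]
    let u : C_c(A × B, ℝ) := CompactlySupportedContinuousMap.continuousMapEquiv
      ⟨fun z => f z.2, by fun_prop⟩
    let fi : Y →ᵇ ℝ := f.compContinuous ⟨j, hj.continuous⟩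
    have h1 := hL u 0 fi 0 le_rfl (fun x y => by simp [u, fi])
    have h2 := hL (-u) 0 (-fi) 0 le_rfl (fun x y => by simp [u, fi])
    have h3 : ∫ z, f z.2 ∂κ' = L u := hκL u
    have h4 : ∫ x, fi x ∂ν = ∫ x, f (j x) ∂ν := rfl
    simp [integral_neg] at h1 h2
    rw [h3]
    linarith
  have hie : MeasurableEmbedding i := hi.continuous.measurableEmbedding hi.injective
  have hje : MeasurableEmbedding j := hj.continuous.measurableEmbedding hj.injective
  let e : X × Y → A × B := Prod.map i j
  have he : Topology.IsEmbedding e := hi.prodMap hj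
  have hee : MeasurableEmbedding e := he.continuous.measurableEmbedding he.injective
  have hr : ∀ᵐ z ∂κ', z ∈ Set.range e := by
    have h1 : ∀ᵐ z ∂κ', z.1 ∈ Set.range i := by
      refine ae_of_ae_map (f := Prod.fst) (p := fun a => a ∈ Set.range i)
        measurable_fst.aemeasurable ?_
      rw [hm1, hie.ae_map_iff]
      exact Filter.Eventually.of_forall fun x => ⟨x, rfl⟩
    have h2 : ∀ᵐ z ∂κ', z.2 ∈ Set.range j := by
      refine ae_of_ae_map (f := Prod.snd) (p := fun a => a ∈ Set.range j)
        measurable_snd.aemeasurable ?_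
      rw [hm2, hje.ae_map_iff]
      exact Filter.Eventually.of_forall fun x => ⟨x, rfl⟩
    filter_upwards [h1, h2] with z hz1 hz2
    rw [Set.range_prodMap]
    exact ⟨hz1, hz2⟩
  let κ : Measure (X × Y) := κ'.comap e
  have hκe : κ.map e = κ' := by
    rw [hee.map_comap, Measure.restrict_eq_self_of_ae_mem hr]
  have hk1 : κ.map Prod.fst = μ := by
    have : (κ.map Prod.fst).map i = μ.map i := by
      rw [← hm1, ← hκe, Measure.map_map him measurable_fst,
        Measure.map_map measurable_fst hee.measurable]
      rfl
    rw [← hie.comap_map (κ.map Prod.fst), this, hie.comap_map]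
  have hk2 : κ.map Prod.snd = ν := by
    have : (κ.map Prod.snd).map j = ν.map j := by
      rw [← hm2, ← hκe, Measure.map_map hjm measurable_snd,
        Measure.map_map measurable_snd hee.measurable]
      rfl
    rw [← hje.comap_map (κ.map Prod.snd), this, hje.comap_map]
  have hkp : IsProbabilityMeasure κ := by
    refine ⟨?_⟩
    have : κ.map Prod.fst Set.univ = 1 := by rw [hk1]; exact measure_univ
    rwa [Measure.map_apply measurable_fst MeasurableSet.univ, Set.preimage_univ] at this
  refine ⟨κ, hkp, hk1, hk2, ?_⟩
  have : Nonempty (X × Y) := nonempty_of_isProbabilityMeasure κ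
  obtain ⟨v, hv1, hv2⟩ := kd_approx e he ω hω_cont hω_nonneg
  -- truncate below by zero
  let w : ℕ → C(A × B, ℝ) := fun k => v k ⊔ 0
  have hw1 : ∀ k p, w k (e p) ≤ ω p := fun k p => by
    simpa [w] using ⟨hv1 k p, hω_nonneg p⟩
  have hw0 : ∀ k z, 0 ≤ w k z := fun k z => by simp [w]
  have hwb : ∀ k, ∫⁻ p, ENNReal.ofReal (w k (e p)) ∂κ ≤ ENNReal.ofReal D := by
    intro k
    have h1 : ∫⁻ p, ENNReal.ofReal (w k (e p)) ∂κ = ∫⁻ z, ENNReal.ofReal (w k z) ∂κ' := by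
      rw [← hκe, hee.lintegral_map]
    let u : C_c(A × B, ℝ) := CompactlySupportedContinuousMap.continuousMapEquiv (w k)
    have hint : Integrable (fun z => w k z) κ' :=
      (BoundedContinuousFunction.mkOfCompact (w k)).integrable κ'
    rw [h1, ← ofReal_integral_eq_lintegral_ofReal hint (Filter.Eventually.of_forall (hw0 k))]
    refine ENNReal.ofReal_le_ofReal ?_
    have h2 : ∫ z, w k z ∂κ' = L u := hκL u
    rw [h2]
    have h3 := hL u 0 0 1 zero_le_one (fun x y => by
      have h4 : u (i x, j y) ≤ ω (x, y) := hw1 k (x, y)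
      simpa using h4)
    simpa using h3
  have hlim : ∀ p, Filter.liminf (fun k => ENNReal.ofReal (w k (e p))) Filter.atTop
      = ENNReal.ofReal (ω p) := by
    intro p
    refine Filter.Tendsto.liminf_eq (ENNReal.tendsto_ofReal ?_)
    have := (hv2 p).max (tendsto_const_nhds (x := (0:ℝ)))
    rw [max_eq_left (hω_nonneg p)] at this
    exact this
  calc ∫⁻ p, ENNReal.ofReal (ω p) ∂κ
      = ∫⁻ p, Filter.liminf (fun k => ENNReal.ofReal (w k (e p))) Filter.atTop ∂κ := by
        simp_rw [hlim]
    _ ≤ Filter.liminf (fun k => ∫⁻ p, ENNReal.ofReal (w k (e p)) ∂κ) Filter.atTop :=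
        lintegral_liminf_le fun k =>
          ENNReal.measurable_ofReal.comp ((w k).continuous.measurable.comp hee.measurable)
    _ ≤ ENNReal.ofReal D := by
        refine (Filter.liminf_le_liminf (Filter.Eventually.of_forall hwb)).trans ?_
        simp

/-- Kantorovich duality: for Polish probability spaces `(X, μ)`, `(Y, ν)` and a
continuous nonnegative cost `ω`, the minimal transport cost over all couplings of
`μ` and `ν` equals the supremum of `∫ φ dν - ∫ ψ dμ` over pairs of bounded
continuous functions with `φ(y) - ψ(x) ≤ ω(x, y)`. -/
theorem stmt_5 (X Y : Type*) [TopologicalSpace X] [PolishSpace X]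
    [MeasurableSpace X] [BorelSpace X]
    [TopologicalSpace Y] [PolishSpace Y] [MeasurableSpace Y] [BorelSpace Y]
    (μ : Measure X) (ν : Measure Y)
    [IsProbabilityMeasure μ] [IsProbabilityMeasure ν]
    (ω : X × Y → ℝ) (hω_cont : Continuous ω) (hω_nonneg : ∀ p, 0 ≤ ω p) :
    sInf {r : ℝ≥0∞ | ∃ κ : Measure (X × Y), IsProbabilityMeasure κ ∧
        κ.map Prod.fst = μ ∧ κ.map Prod.snd = ν ∧
        r = ∫⁻ p, ENNReal.ofReal (ω p) ∂κ} =
      sSup {r : ℝ≥0∞ | ∃ (ψ : BoundedContinuousFunction X ℝ)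
          (φ : BoundedContinuousFunction Y ℝ),
          (∀ x y, φ y - ψ x ≤ ω (x, y)) ∧
          r = ENNReal.ofReal ((∫ y, φ y ∂ν) - (∫ x, ψ x ∂μ))} := by
  refine le_antisymm ?_ ?_
  · set T := sSup {r : ℝ≥0∞ | ∃ (ψ : BoundedContinuousFunction X ℝ)
          (φ : BoundedContinuousFunction Y ℝ),
          (∀ x y, φ y - ψ x ≤ ω (x, y)) ∧
          r = ENNReal.ofReal ((∫ y, φ y ∂ν) - (∫ x, ψ x ∂μ))} with hT
    by_cases htop : T = ⊤
    · rw [htop]; exact le_top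
    letI := TopologicalSpace.metrizableSpaceMetric X
    letI := TopologicalSpace.metrizableSpaceMetric Y
    letI : MetricSpace (ℕ → unitInterval) := TopologicalSpace.metrizableSpaceMetric _
    obtain ⟨i, hi⟩ := Metric.PiNatEmbed.exists_embedding_to_hilbert_cube (X := X)
    obtain ⟨j, hj⟩ := Metric.PiNatEmbed.exists_embedding_to_hilbert_cube (X := Y)
    have key : ∀ (f : BoundedContinuousFunction X ℝ) (g : BoundedContinuousFunction Y ℝ),
        (∀ x y, 0 ≤ f x + g y + ω (x, y)) →
        0 ≤ ∫ x, f x ∂μ + ∫ y, g y ∂ν + T.toReal := by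
      intro f g h
      have h1 : ENNReal.ofReal ((∫ y, (-g) y ∂ν) - (∫ x, f x ∂μ)) ≤ T :=
        le_sSup ⟨f, -g, fun x y => by
          have := h x y
          simp only [BoundedContinuousFunction.coe_neg, Pi.neg_apply]
          linarith, rfl⟩
      have h2 := (ENNReal.ofReal_le_iff_le_toReal htop).1 h1
      simp only [BoundedContinuousFunction.coe_neg, Pi.neg_apply, integral_neg] at h2
      linarith
    obtain ⟨κ, hκ, hκ1, hκ2, hκ3⟩ := kd_strong μ ν ω hω_cont hω_nonneg i j hi hj T.toReal (by
      intro f g t ht h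
      rcases ht.eq_or_lt with rfl | ht
      · simp only [zero_mul, add_zero] at h ⊢
        by_contra hneg
        push Not at hneg
        set a := ∫ x, f x ∂μ + ∫ y, g y ∂ν with ha
        obtain ⟨n, hn⟩ := exists_nat_gt (T.toReal / (-a))
        rw [div_lt_iff₀ (by linarith)] at hn
        have := key ((n : ℝ) • f) ((n : ℝ) • g) (fun x y => by
          have h1 := mul_nonneg (Nat.cast_nonneg (α := ℝ) n) (h x y)
          have h2 := hω_nonneg (x, y)
          simp only [BoundedContinuousFunction.coe_smul, smul_eq_mul]
          linarith)
        simp only [BoundedContinuousFunction.coe_smul, smul_eq_mul, integral_const_mul] at this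
        have h5 : (n : ℝ) * a = n * ∫ x, f x ∂μ + n * ∫ y, g y ∂ν := by rw [ha]; ring
        linarith
      · have := key (t⁻¹ • f) (t⁻¹ • g) (fun x y => by
          have h1 := mul_nonneg (inv_pos.2 ht).le (h x y)
          have h2 : t⁻¹ * (f x + g y + t * ω (x, y)) = t⁻¹ * f x + t⁻¹ * g y + ω (x, y) := by
            field_simp
          simp only [BoundedContinuousFunction.coe_smul, smul_eq_mul]
          linarith)
        simp only [BoundedContinuousFunction.coe_smul, smul_eq_mul, integral_const_mul] at this
        have h1 := mul_nonneg ht.le this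
        have h2 : t * (t⁻¹ * ∫ x, f x ∂μ + t⁻¹ * ∫ y, g y ∂ν + T.toReal) =
            ∫ x, f x ∂μ + ∫ y, g y ∂ν + t * T.toReal := by
          field_simp
        linarith)
    rw [ENNReal.ofReal_toReal htop] at hκ3
    refine le_trans (sInf_le ?_) hκ3
    exact ⟨κ, hκ, hκ1, hκ2, rfl⟩
  · refine sSup_le ?_
    rintro _ ⟨ψ, φ, h, rfl⟩
    refine le_sInf ?_
    rintro _ ⟨κ, hκ, rfl, rfl, rfl⟩
    exact kd_weak ω hω_cont hω_nonneg κ ψ φ h
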